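/- Let p be an odd rational prime with p ≠ 17 such that p splits in K = ℚ(√−17) (equivalently, −17 is a nonzero quadratic residue modulo p). Then for every prime ideal 𝔭 of 𝓞_K lying above p, the ideal class [𝔭] is a square in the class group Cl(K) if and only if p ≡ 1 (mod 4). -/

import Mathlib

open NumberField nonZeroDivisors

theorem Int.exists_eq_two_mul_or_sq_eq (x : ℤ) :
    (∃ y, x = 2 * y) ∨ (x % 2 = 1 ∧ ∃ y, x ^ 2 = 4 * y + 1) := by
  obtain ⟨y, hy | hy⟩ := Int.even_or_odd' x
  · exact .inl ⟨y, hy⟩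
  · exact .inr ⟨by omega, y ^ 2 + y, by rw [hy]; ring⟩

theorem int_emod_four_eq_one_of_mul_sq (p : ℤ) (hp : p % 2 = 1) (m : ℕ) :
    0 < m → ∀ a b : ℤ, p * m ^ 2 = a ^ 2 + 17 * b ^ 2 → p % 4 = 1 := by
  induction m using Nat.strong_induction_on with
  | _ m ih =>
    intro hm a b h
    rcases Int.exists_eq_two_mul_or_sq_eq m with ⟨n, hn⟩ | ⟨-, n, hn⟩
    · obtain ⟨n, rfl⟩ : ∃ k : ℕ, m = 2 * k := ⟨m / 2, by omega⟩
      push_cast at h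
      have h4 : 4 * (p * n ^ 2) = a ^ 2 + 17 * b ^ 2 := by rw [← h]; ring
      rcases Int.exists_eq_two_mul_or_sq_eq a with ⟨c, rfl⟩ | ⟨-, c, hc⟩ <;>
      rcases Int.exists_eq_two_mul_or_sq_eq b with ⟨d, rfl⟩ | ⟨-, d, hd⟩
      · exact ih n (by omega) (by omega) c d (by linarith)
      · rw [mul_pow] at h4; omega
      · rw [mul_pow] at h4; omega
      · omega
    · rw [hn] at h
      have h' : 4 * (p * n) + p = a ^ 2 + 17 * b ^ 2 := by rw [← h]; ring
      rcases Int.exists_eq_two_mul_or_sq_eq a with ⟨c, rfl⟩ | ⟨-, c, hc⟩ <;>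
      rcases Int.exists_eq_two_mul_or_sq_eq b with ⟨d, rfl⟩ | ⟨-, d, hd⟩ <;>
        (try simp only [mul_pow] at h') <;> omega

theorem emod_four_eq_one_of_eq_rat_form (p : ℕ) (hp : p % 2 = 1) (u v : ℚ)
    (h : (p : ℚ) = u ^ 2 + 17 * v ^ 2) : p % 4 = 1 := by
  have := int_emod_four_eq_one_of_mul_sq p (by omega) (u.den * v.den)
    (Nat.mul_pos u.den_pos v.den_pos) (u.num * v.den) (v.num * u.den) (by
      rw [← @Int.cast_inj ℚ]
      push_cast
      rw [h]
      have hu : (u.num : ℚ) = u * u.den := (Rat.mul_den_eq_num u).symm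
      have hv : (v.num : ℚ) = v * v.den := (Rat.mul_den_eq_num v).symm
      rw [hu, hv]; ring)
  omega

/-- Gauss reduction of a form of discriminant `-68`. -/
theorem exists_form_le_four (n : ℕ) :
    ∀ A B C : ℤ, A.natAbs = n → 0 < A → A * C - B ^ 2 = 17 →
      ∃ x y : ℤ, 0 < A * x ^ 2 + 2 * B * x * y + C * y ^ 2 ∧
        A * x ^ 2 + 2 * B * x * y + C * y ^ 2 ≤ 4 := by
  induction n using Nat.strong_induction_on with
  | _ n ih =>
    intro A B C hn hA h
    by_cases h4 : A ≤ 4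
    · exact ⟨1, 0, by simpa using hA, by simpa using h4⟩
    obtain ⟨t, D, hD, hD1, hD2⟩ : ∃ t D : ℤ, D = B + A * t ∧ -A ≤ 2 * D ∧ 2 * D ≤ A := by
      refine ⟨-((2 * B + A) / (2 * A)), _, rfl, ?_, ?_⟩
      · nlinarith [Int.mul_ediv_self_le (x := 2 * B + A) (k := 2 * A) (by omega)]
      · nlinarith [Int.lt_mul_ediv_self_add (x := 2 * B + A) (k := 2 * A) (by omega)]
    obtain ⟨E, hE⟩ : ∃ E : ℤ, E = C + 2 * B * t + A * t ^ 2 := ⟨_, rfl⟩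
    have hdet : E * A - (-D) ^ 2 = 17 := by rw [hE, hD, ← h]; ring
    have hEpos : 0 < E := by
      by_contra hle
      nlinarith [sq_nonneg D]
    have hEA : E < A := by
      by_contra hle
      nlinarith [mul_nonneg (sub_nonneg.2 hD2) (by linarith : 0 ≤ A + 2 * D)]
    obtain ⟨x, y, hxy⟩ := ih E.natAbs (by omega) E (-D) A rfl hEpos hdet
    refine ⟨-y + t * x, x, ?_⟩
    have : A * (-y + t * x) ^ 2 + 2 * B * (-y + t * x) * x + C * x ^ 2
        = E * x ^ 2 + 2 * -D * x * y + A * y ^ 2 := by rw [hE, hD]; ring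
    rwa [this]

theorem exists_eq_or_two_mul_eq_form (p : ℕ) (hp : p % 4 = 1)
    (r m : ℤ) (hr : r ^ 2 + 17 = p * m) :
    ∃ a b : ℤ, (p : ℤ) = a ^ 2 + 17 * b ^ 2 ∨
      2 * (p : ℤ) = a ^ 2 + 17 * b ^ 2 ∧ a % 2 = 1 ∧ b % 2 = 1 := by
  obtain ⟨x, y, h0, h4⟩ := exists_form_le_four _ p r m rfl (by omega) (by linarith)
  obtain ⟨k, hk⟩ : ∃ k : ℤ, k = p * x ^ 2 + 2 * r * x * y + m * y ^ 2 := ⟨_, rfl⟩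
  rw [← hk] at h0 h4
  obtain ⟨a, ha⟩ : ∃ a : ℤ, a = p * x + r * y := ⟨_, rfl⟩
  have hkey : p * k = a ^ 2 + 17 * y ^ 2 := by
    rw [hk, ha]
    linear_combination y ^ 2 * -hr
  clear ha hk
  obtain rfl | rfl | rfl | rfl : k = 1 ∨ k = 2 ∨ k = 3 ∨ k = 4 := by omega
  · exact ⟨a, y, .inl (by linarith)⟩
  all_goals
    rcases Int.exists_eq_two_mul_or_sq_eq a with ⟨c, rfl⟩ | ⟨ha, c, hc⟩ <;>
      rcases Int.exists_eq_two_mul_or_sq_eq y with ⟨d, rfl⟩ | ⟨hb, d, hd⟩ <;>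
      try ((try simp only [mul_pow] at hkey); omega)
  · exact ⟨a, y, .inr ⟨by linarith, ha, hb⟩⟩
  · exact ⟨c, d, .inl (by linarith)⟩

section
variable {K : Type*} [Field K] [NumberField K] {ω : K}

theorem exists_rat_basis_one_omega (hω : ω ^ 2 = -17) (hK : Algebra.adjoin ℚ {ω} = ⊤) :
    ∃ b : Module.Basis (Fin 2) ℚ K, b 0 = 1 ∧ b 1 = ω := by
  have hli : LinearIndependent ℚ ![(1 : K), ω] := by
    rw [LinearIndependent.pair_iff]
    intro s t h
    rw [Algebra.smul_def, Algebra.smul_def, mul_one] at h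
    have h2 : s ^ 2 + 17 * t ^ 2 = 0 := by
      apply (algebraMap ℚ K).injective
      simp only [map_add, map_mul, map_pow, map_ofNat, map_zero]
      linear_combination
        (algebraMap ℚ K s - algebraMap ℚ K t * ω) * h + (algebraMap ℚ K t) ^ 2 * hω
    have hs : s = 0 := by nlinarith [sq_nonneg s, sq_nonneg t]
    have ht : t = 0 := by nlinarith [sq_nonneg s, sq_nonneg t]
    exact ⟨hs, ht⟩
  have hsp : ⊤ ≤ Submodule.span ℚ (Set.range ![(1 : K), ω]) := by
    intro x _
    rw [Matrix.range_cons, Matrix.range_cons, Matrix.range_empty, Set.union_empty,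
      Set.singleton_union, Submodule.mem_span_pair]
    have hx : x ∈ Algebra.adjoin ℚ {ω} := hK ▸ Algebra.mem_top
    induction hx using Algebra.adjoin_induction with
    | mem x hx => exact ⟨0, 1, by simp [Set.mem_singleton_iff.1 hx]⟩
    | algebraMap r => exact ⟨r, 0, by simp [Algebra.smul_def]⟩
    | add x y _ _ hx hy =>
      obtain ⟨a, b, rfl⟩ := hx trivial
      obtain ⟨c, d, rfl⟩ := hy trivial
      exact ⟨a + c, b + d, by simp only [add_smul]; ring⟩
    | mul x y _ _ hx hy =>
      obtain ⟨a, b, rfl⟩ := hx trivial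
      obtain ⟨c, d, rfl⟩ := hy trivial
      refine ⟨a * c - 17 * (b * d), a * d + b * c, ?_⟩
      simp only [Algebra.smul_def, map_add, map_sub, map_mul, map_ofNat]
      linear_combination -(algebraMap ℚ K b) * (algebraMap ℚ K d) * hω
  exact ⟨.mk hli hsp, by simp, by simp⟩

theorem norm_add_mul_omega (hω : ω ^ 2 = -17) (hK : Algebra.adjoin ℚ {ω} = ⊤) (u v : ℚ) :
    Algebra.norm ℚ (algebraMap ℚ K u + algebraMap ℚ K v * ω) = u ^ 2 + 17 * v ^ 2 := by
  obtain ⟨b, hb0, hb1⟩ := exists_rat_basis_one_omega hω hK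
  have h0 : (algebraMap ℚ K u + algebraMap ℚ K v * ω) * b 0 = u • b 0 + v • b 1 := by
    rw [hb0, hb1, Algebra.smul_def, Algebra.smul_def]; ring
  have h1 : (algebraMap ℚ K u + algebraMap ℚ K v * ω) * b 1 = (-17 * v) • b 0 + u • b 1 := by
    rw [hb0, hb1, Algebra.smul_def, Algebra.smul_def, map_mul, map_neg, map_ofNat]
    linear_combination (algebraMap ℚ K v) * hω
  rw [Algebra.norm_eq_matrix_det b, Matrix.det_fin_two]
  simp only [Algebra.leftMulMatrix_eq_repr_mul, h0, h1, map_add, map_smul, Module.Basis.repr_self]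
  simp
  ring

theorem exists_norm_eq_rat_form (hω : ω ^ 2 = -17) (hK : Algebra.adjoin ℚ {ω} = ⊤) (x : K) :
    ∃ u v : ℚ, Algebra.norm ℚ x = u ^ 2 + 17 * v ^ 2 := by
  obtain ⟨b, hb0, hb1⟩ := exists_rat_basis_one_omega hω hK
  refine ⟨b.repr x 0, b.repr x 1, ?_⟩
  rw [← norm_add_mul_omega hω hK]
  congr 1
  conv_lhs => rw [← b.sum_repr x]
  simp [hb0, hb1, Algebra.smul_def]

theorem absNorm_span_add_mul (hω : ω ^ 2 = -17) (hK : Algebra.adjoin ℚ {ω} = ⊤)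
    {w : 𝓞 K} (hw : algebraMap (𝓞 K) K w = ω) (a b : ℤ) :
    (Ideal.absNorm (Ideal.span {(a + b * w : 𝓞 K)}) : ℤ) = a ^ 2 + 17 * b ^ 2 := by
  have h : Algebra.norm ℤ (a + b * w : 𝓞 K) = a ^ 2 + 17 * b ^ 2 := by
    rw [← @Int.cast_inj ℚ, Algebra.coe_norm_int]
    have := norm_add_mul_omega hω hK a b
    simp only [map_intCast] at this
    push_cast
    rw [← this, ← hw]
    simp only [map_intCast]
  rw [Ideal.absNorm_span_singleton, h, Int.natAbs_of_nonneg (by positivity)]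

theorem exists_rat_form_of_isSquare (hω : ω ^ 2 = -17) (hK : Algebra.adjoin ℚ {ω} = ⊤)
    {p : ℕ} (P : (Ideal (𝓞 K))⁰) (hP : Ideal.absNorm (P : Ideal (𝓞 K)) = p)
    (hsq : IsSquare (ClassGroup.mk0 P)) :
    ∃ u v : ℚ, (p : ℚ) = u ^ 2 + 17 * v ^ 2 := by
  obtain ⟨c, hc⟩ := hsq
  obtain ⟨I, rfl⟩ := ClassGroup.mk0_surjective c
  rw [← map_mul, ClassGroup.mk0_eq_mk0_iff] at hc
  obtain ⟨x, y, hx, hy, h⟩ := hc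
  have h' := congrArg (fun J => (Ideal.absNorm J : ℚ)) h
  have habs : ∀ z : 𝓞 K, (Ideal.absNorm (Ideal.span {z}) : ℚ) = Algebra.norm ℚ (z : K) := by
    intro z
    obtain ⟨u, v, huv⟩ := exists_norm_eq_rat_form hω hK (z : K)
    rw [Ideal.absNorm_span_singleton, Nat.cast_natAbs, Int.cast_abs, Algebra.coe_norm_int,
      huv, abs_of_nonneg (by positivity)]
  simp only [map_mul, Submonoid.coe_mul, Nat.cast_mul, habs, hP] at h'
  set n := Ideal.absNorm (I : Ideal (𝓞 K))
  have hn : Algebra.norm ℚ (n : K) = (n : ℚ) ^ 2 := by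
    have := norm_add_mul_omega hω hK n 0
    simpa using this
  have hx0 : Algebra.norm ℚ (x : K) ≠ 0 := by simpa [Algebra.norm_eq_zero_iff] using hx
  obtain ⟨u, v, huv⟩ := exists_norm_eq_rat_form hω hK ((y : K) * n / x)
  refine ⟨u, v, ?_⟩
  have hdiv := map_mul (Algebra.norm ℚ) ((y : K) * n / x) x
  rw [div_mul_cancel₀ _ (by simpa using hx), map_mul, hn, huv] at hdiv
  refine mul_left_cancel₀ hx0 ?_
  linear_combination h' + hdiv

theorem absNorm_eq_of_split (hω : ω ^ 2 = -17) (hK : Algebra.adjoin ℚ {ω} = ⊤)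
    {w : 𝓞 K} (hw : algebraMap (𝓞 K) K w = ω) (hw2 : w ^ 2 = -17)
    {p : ℕ} (hp : p.Prime) (hodd : p ≠ 2) {r m : ℤ} (hr : r ^ 2 + 17 = p * m)
    (hrp : ¬ (p : ℤ) ∣ r) {P : Ideal (𝓞 K)} (hP : P.IsPrime) (hpP : (p : 𝓞 K) ∈ P) :
    Ideal.absNorm P = p := by
  have hp' : Prime (p : ℤ) := Nat.prime_iff_prime_int.1 hp
  have h1 : Ideal.absNorm P ∣ p ^ 2 := by
    have h := absNorm_span_add_mul hω hK hw p 0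
    have hle : Ideal.absNorm P ∣ Ideal.absNorm (Ideal.span {((p : ℤ) + (0 : ℤ) * w : 𝓞 K)}) :=
      Ideal.absNorm_dvd_absNorm_of_le (by simpa [Ideal.span_singleton_le_iff_mem] using hpP)
    have h' : Ideal.absNorm (Ideal.span {((p : ℤ) + (0 : ℤ) * w : 𝓞 K)}) = p ^ 2 := by
      rw [← @Nat.cast_inj ℤ, h]; push_cast; ring
    rwa [h'] at hle
  have h2 : ∀ s n : ℤ, s ^ 2 + 17 = p * n → (Ideal.absNorm P : ℤ) ∣ p * n := by
    intro s n hs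
    have hmem : ((s : 𝓞 K) + (1 : ℤ) * w) * (s + (-1 : ℤ) * w) ∈ P := by
      have : ((s : 𝓞 K) + (1 : ℤ) * w) * (s + (-1 : ℤ) * w) = n * p := by
        have hs' := congrArg (Int.cast : ℤ → 𝓞 K) hs
        push_cast at hs' ⊢
        linear_combination hs' - hw2
      rw [this]
      exact P.mul_mem_left _ hpP
    rcases hP.mem_or_mem hmem with h | h
    all_goals
      have := Int.natCast_dvd_natCast.2 (Ideal.absNorm_dvd_absNorm_of_le
        ((Ideal.span_singleton_le_iff_mem _).2 h))
      rw [absNorm_span_add_mul hω hK hw] at this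
      rw [← hs]
      simpa using this
  obtain ⟨k, hk, hk'⟩ := (Nat.dvd_prime_pow hp).1 h1
  have hk0 : k ≠ 0 := by
    rintro rfl
    exact hP.ne_top (Ideal.absNorm_eq_one_iff.1 (by simpa using hk'))
  have hk2 : k ≠ 2 := by
    rintro rfl
    have hp0 : (p : ℤ) ≠ 0 := by exact_mod_cast hp.ne_zero
    have key : ∀ s n : ℤ, s ^ 2 + 17 = p * n → (p : ℤ) ∣ n := by
      intro s n hs
      have := h2 s n hs
      rw [hk', Nat.cast_pow, sq] at this
      exact (mul_dvd_mul_iff_left hp0).1 this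
    have ha := key r m hr
    have hb := key (r + p) (m + 2 * r + p) (by linear_combination hr)
    have h2r : (p : ℤ) ∣ 2 * r := by
      have := dvd_sub (dvd_sub hb ha) (dvd_refl (p : ℤ))
      ring_nf at this ⊢
      exact this
    rcases hp'.dvd_or_dvd h2r with h | h
    · exact hodd ((Nat.prime_dvd_prime_iff_eq hp Nat.prime_two).1 (by exact_mod_cast h))
    · exact hrp h
  obtain rfl : k = 1 := by omega
  simpa using hk'

theorem Ideal.eq_of_le_of_absNorm_eq {S : Type*} [CommRing S] [IsDedekindDomain S]
    [Module.Free ℤ S] {I J : Ideal S} (hle : I ≤ J)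
    (h : Ideal.absNorm I = Ideal.absNorm J) (h0 : Ideal.absNorm I ≠ 0) : I = J := by
  obtain ⟨L, rfl⟩ := Ideal.dvd_iff_le.2 hle
  rw [map_mul] at h h0
  have : Ideal.absNorm L = 1 := by
    refine Nat.eq_of_mul_eq_mul_left (Nat.pos_of_ne_zero (left_ne_zero_of_mul h0)) ?_
    rw [h, mul_one]
  rw [Ideal.absNorm_eq_one_iff.1 this, Ideal.mul_top]

/-- The square of the prime `(2, 1 + √-17)` is `(2)`. -/
theorem span_two_mul_self {R : Type*} [CommRing R] {w : R} (hw2 : w ^ 2 = -17) :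
    Ideal.span {2, 1 + w} * Ideal.span {2, 1 + w} = Ideal.span {(2 : R)} := by
  rw [Ideal.span_pair_mul_span_pair]
  apply le_antisymm
  · rw [Ideal.span_le]
    rintro x (rfl | rfl | rfl | rfl) <;> rw [SetLike.mem_coe, Ideal.mem_span_singleton]
    · exact ⟨2, rfl⟩
    · exact ⟨1 + w, rfl⟩
    · exact ⟨1 + w, by ring⟩
    · exact ⟨w - 8, by linear_combination hw2⟩
  · rw [Ideal.span_singleton_le_iff_mem]
    simp only [Ideal.mem_span_insert, Ideal.mem_span_singleton']
    exact ⟨-4, _, ⟨1, _, ⟨0, _, ⟨-1, rfl⟩, rfl⟩, rfl⟩, by linear_combination hw2⟩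

/-- The factorization of `(1 + √-17)`. -/
theorem span_two_mul_span_three_sq {R : Type*} [CommRing R] {w : R} (hw2 : w ^ 2 = -17) :
    Ideal.span {2, 1 + w} * (Ideal.span {3, 1 + w} * Ideal.span {3, 1 + w}) =
      Ideal.span {1 + w} := by
  have h9 : Ideal.span {3, 1 + w} * Ideal.span {3, 1 + w} = Ideal.span {9, 1 + w} := by
    rw [Ideal.span_pair_mul_span_pair]
    apply le_antisymm
    · rw [Ideal.span_le]
      rintro x (rfl | rfl | rfl | rfl) <;> rw [SetLike.mem_coe, Ideal.mem_span_pair]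
      · exact ⟨1, 0, by ring⟩
      · exact ⟨0, 3, by ring⟩
      · exact ⟨0, 3, by ring⟩
      · exact ⟨0, 1 + w, by ring⟩
    · rw [Ideal.span_le]
      rintro x (rfl | rfl) <;>
        simp only [SetLike.mem_coe, Ideal.mem_span_insert, Ideal.mem_span_singleton']
      · exact ⟨1, _, ⟨0, _, ⟨0, _, ⟨0, rfl⟩, rfl⟩, rfl⟩, by ring⟩
      · exact ⟨-2, _, ⟨1, _, ⟨0, _, ⟨-1, rfl⟩, rfl⟩, rfl⟩, by linear_combination hw2⟩
  rw [h9, Ideal.span_pair_mul_span_pair]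
  apply le_antisymm
  · rw [Ideal.span_le]
    rintro x (rfl | rfl | rfl | rfl) <;> rw [SetLike.mem_coe, Ideal.mem_span_singleton]
    · exact ⟨1 - w, by linear_combination hw2⟩
    · exact ⟨2, by ring⟩
    · exact ⟨9, by ring⟩
    · exact ⟨1 + w, rfl⟩
  · rw [Ideal.span_singleton_le_iff_mem]
    simp only [Ideal.mem_span_insert, Ideal.mem_span_singleton']
    exact ⟨0, _, ⟨-4, _, ⟨1, _, ⟨0, rfl⟩, rfl⟩, rfl⟩, by ring⟩

theorem isSquare_mk0_of_form (hω : ω ^ 2 = -17) (hK : Algebra.adjoin ℚ {ω} = ⊤)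
    {w : 𝓞 K} (hw : algebraMap (𝓞 K) K w = ω) (hw2 : w ^ 2 = -17)
    {p : ℕ} (hp : p.Prime) (hodd : p ≠ 2) (P : (Ideal (𝓞 K))⁰) {a b : ℤ}
    (hmem : (a + b * w : 𝓞 K) ∈ (P : Ideal (𝓞 K)))
    (hP : Ideal.absNorm (P : Ideal (𝓞 K)) = p)
    (h : (p : ℤ) = a ^ 2 + 17 * b ^ 2 ∨
      2 * (p : ℤ) = a ^ 2 + 17 * b ^ 2 ∧ a % 2 = 1 ∧ b % 2 = 1) :
    IsSquare (ClassGroup.mk0 P) := by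
  have hN := absNorm_span_add_mul hω hK hw a b
  have hle := (Ideal.span_singleton_le_iff_mem _).2 hmem
  rcases h with h | ⟨h, ha, hb⟩
  · have hNp : Ideal.absNorm (Ideal.span {(a + b * w : 𝓞 K)}) = p := by
      rw [← h] at hN; exact_mod_cast hN
    have hPeq := Ideal.eq_of_le_of_absNorm_eq hle (hNp.trans hP.symm)
      (by rw [hNp]; exact hp.ne_zero)
    have h1 : ClassGroup.mk0 P = 1 := (ClassGroup.mk0_eq_one_iff P.2).2 ⟨⟨_, hPeq.symm⟩⟩
    rw [h1]
    exact IsSquare.one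
  · have hNp : Ideal.absNorm (Ideal.span {(a + b * w : 𝓞 K)}) = 2 * p := by
      rw [← h] at hN; exact_mod_cast hN
    set Q : Ideal (𝓞 K) := Ideal.span {2, 1 + w} with hQ
    set T : Ideal (𝓞 K) := Ideal.span {3, 1 + w} with hT
    have hQ2 : Ideal.absNorm Q = 2 := by
      have h2 := congrArg Ideal.absNorm (span_two_mul_self hw2)
      have h4 := absNorm_span_add_mul hω hK hw 2 0
      simp only [Int.cast_ofNat, Int.cast_zero, zero_mul, add_zero] at h4
      rw [map_mul] at h2
      zify at h2 ⊢
      rw [h4] at h2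
      nlinarith
    have hcop : IsCoprime (P : Ideal (𝓞 K)) Q := by
      rw [Ideal.isCoprime_iff_exists]
      obtain ⟨k, hk⟩ := hp.odd_of_ne_two hodd
      refine ⟨p, ?_, -k * 2, Q.mul_mem_left _ (Ideal.subset_span (by simp)), ?_⟩
      · rw [← hP]; exact Ideal.absNorm_mem _
      · rw [hk]; push_cast; ring
    have hmemQ : (a + b * w : 𝓞 K) ∈ Q := by
      rw [hQ, Ideal.mem_span_pair]
      obtain ⟨c, hc⟩ : ∃ c, a - b = 2 * c := ⟨(a - b) / 2, by omega⟩
      have hc' := congrArg (Int.cast : ℤ → 𝓞 K) hc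
      push_cast at hc'
      exact ⟨c, b, by linear_combination -hc'⟩
    have hprod : Ideal.span {(a + b * w : 𝓞 K)} = P * Q := by
      refine Ideal.eq_of_le_of_absNorm_eq ?_ ?_ ?_
      · rw [Ideal.mul_eq_inf_of_isCoprime hcop]
        exact le_inf hle ((Ideal.span_singleton_le_iff_mem _).2 hmemQ)
      · rw [map_mul, hP, hQ2, hNp, mul_comm]
      · rw [hNp]; exact mul_ne_zero two_ne_zero hp.ne_zero
    have hQ0 : Q ∈ (Ideal (𝓞 K))⁰ := Ideal.absNorm_ne_zero_iff_mem_nonZeroDivisors.1 (by simp [hQ2])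
    have hT0 : T ∈ (Ideal (𝓞 K))⁰ := by
      refine mem_nonZeroDivisors_of_ne_zero fun h0 => OfNat.ofNat_ne_zero (R := 𝓞 K) 3 ?_
      rw [← Ideal.mem_bot, ← Ideal.zero_eq_bot, ← h0]
      exact Ideal.subset_span (by simp)
    have hPQ : ClassGroup.mk0 P * ClassGroup.mk0 ⟨Q, hQ0⟩ = 1 := by
      rw [← map_mul]
      exact (ClassGroup.mk0_eq_one_iff _).2 ⟨⟨_, hprod.symm⟩⟩
    have hQT : ClassGroup.mk0 ⟨Q, hQ0⟩ *
        (ClassGroup.mk0 ⟨T, hT0⟩ * ClassGroup.mk0 ⟨T, hT0⟩) = 1 := by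
      rw [← map_mul, ← map_mul]
      exact (ClassGroup.mk0_eq_one_iff _).2 ⟨⟨_, span_two_mul_span_three_sq hw2⟩⟩
    exact ⟨ClassGroup.mk0 ⟨T, hT0⟩,
      (eq_inv_of_mul_eq_one_left hPQ).trans (inv_eq_of_mul_eq_one_right hQT)⟩

end

/-- For an odd prime `p ≠ 17` which splits in `K = ℚ(√−17)` (i.e. `-17` is a nonzero square
mod `p`), the class of any prime of `𝓞_K` above `p` is a square in `Cl(K)` iff `p ≡ 1 (mod 4)`. -/
theorem class_of_prime_above_split_prime_isSquare_iff
    (K : Type*) [Field K] [NumberField K] (ω : K)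
    (hω : ω ^ 2 = -17) (hK : Algebra.adjoin ℚ {ω} = ⊤)
    (p : ℕ) (hp : p.Prime) (hodd : p ≠ 2) (h17 : p ≠ 17)
    (hsplit : IsSquare (-17 : ZMod p)) (hne : (-17 : ZMod p) ≠ 0) :
    ∀ (P : Ideal (𝓞 K)) (hP0 : P ∈ (Ideal (𝓞 K))⁰), P.IsPrime → (p : 𝓞 K) ∈ P →
      (IsSquare (ClassGroup.mk0 ⟨P, hP0⟩) ↔ p % 4 = 1) := by
  intro P hP0 hP hpP
  have hint : IsIntegral ℤ ω := ⟨Polynomial.X ^ 2 + 17, by monicity!, by simp [hω]⟩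
  obtain ⟨w, hw⟩ : ∃ w : 𝓞 K, algebraMap (𝓞 K) K w = ω := ⟨⟨ω, hint⟩, rfl⟩
  have hw2 : w ^ 2 = -17 := by
    apply RingOfIntegers.coe_injective
    simp only [map_pow, map_neg, map_ofNat, hw, hω]
  obtain ⟨s, hs⟩ := hsplit
  obtain ⟨r, rfl⟩ := ZMod.intCast_surjective s
  obtain ⟨m, hm⟩ : (p : ℤ) ∣ r ^ 2 + 17 := by
    rw [← ZMod.intCast_zmod_eq_zero_iff_dvd]
    push_cast
    linear_combination -hs
  have hrp : ¬ (p : ℤ) ∣ r := fun h => hne (by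
    rw [hs, (ZMod.intCast_zmod_eq_zero_iff_dvd r p).2 h, mul_zero])
  have hN := absNorm_eq_of_split hω hK hw hw2 hp hodd hm hrp hP hpP
  constructor
  · intro hsq
    obtain ⟨u, v, huv⟩ := exists_rat_form_of_isSquare hω hK ⟨P, hP0⟩ hN hsq
    exact emod_four_eq_one_of_eq_rat_form p (hp.eq_two_or_odd.resolve_left hodd) u v huv
  · intro hp4
    obtain ⟨a, b, hab⟩ := exists_eq_or_two_mul_eq_form p hp4 r m hm
    have hmem : ((a : 𝓞 K) + b * w) * (a + (-b : ℤ) * w) ∈ P := by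
      have h : ((a : 𝓞 K) + b * w) * (a + (-b : ℤ) * w) = (a ^ 2 + 17 * b ^ 2 : ℤ) := by
        push_cast
        linear_combination -(b : 𝓞 K) ^ 2 * hw2
      rw [h]
      rcases hab with hab | ⟨hab, -, -⟩ <;> rw [← hab]
      · simpa using hpP
      · push_cast
        exact P.mul_mem_left _ hpP
    rcases hP.mem_or_mem hmem with h | h
    · exact isSquare_mk0_of_form hω hK hw hw2 hp hodd ⟨P, hP0⟩ h hN hab
    · refine isSquare_mk0_of_form hω hK hw hw2 hp hodd ⟨P, hP0⟩ h hN ?_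
      rw [neg_sq]
      exact hab.imp_right fun ⟨h, ha, hb⟩ => ⟨h, ha, by omega⟩
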